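/- Let Σ = (PROP, ∅) be a hybrid signature without nominals, and consider the {↓}-fragment: hybrid formulas built from ⊥, propositions, world variables, ¬, ∨, ◇ and ↓ only. For a first-order formula φ(x) over Σ° in one free variable, the following are equivalent: (1) φ(x) is logically equivalent to the standard translation ST_x(ψ) of some hybrid sentence ψ of the {↓}-fragment; (2) φ(x) is invariant under quasi-injective bisimulations, i.e., whenever B is a quasi-injective bisimulation between Kripke structures M and N over Σ and (m, n) ∈ B, then M ⊨ φ[m] iff N ⊨ φ[n]. -/

import Mathlib

set_option autoImplicit false

/-! ## Hybrid logic: Kripke structures, hybrid formulas, satisfaction -/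

/-- A Kripke structure over a hybrid signature `Σ = (P, Nom)`:
`P` the propositional variables, `Nom` the nominals. -/
structure Kripke (P : Type) (Nom : Type) : Type 1 where
  W : Type
  R : W → W → Prop
  V : P → W → Prop
  nom : Nom → W

/-- Hybrid formulas over `Σ = (P, Nom)`; the world variables are the natural numbers.
`bind x φ` is `↓x φ`, `atv x φ` is `@_x φ`, `atn s φ` is `@_s φ`, `exq x φ` is `∃x φ`. -/
inductive HForm (P : Type) (Nom : Type) : Type
  | bot  : HForm P Nom
  | prop (p : P) : HForm P Nom
  | nom  (s : Nom) : HForm P Nom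
  | wvar (x : ℕ) : HForm P Nom
  | neg  (φ : HForm P Nom) : HForm P Nom
  | or   (φ ψ : HForm P Nom) : HForm P Nom
  | dia  (φ : HForm P Nom) : HForm P Nom
  | bind (x : ℕ) (φ : HForm P Nom) : HForm P Nom
  | atv  (x : ℕ) (φ : HForm P Nom) : HForm P Nom
  | atn  (s : Nom) (φ : HForm P Nom) : HForm P Nom
  | exq  (x : ℕ) (φ : HForm P Nom) : HForm P Nom

namespace HForm

/-- Conjunction, as an abbreviation `φ ∧ ψ := ¬(¬φ ∨ ¬ψ)`. -/
def and {P Nom : Type} (φ ψ : HForm P Nom) : HForm P Nom := .neg (.or (.neg φ) (.neg ψ))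

/-- Free world variables of a hybrid formula. -/
def free {P Nom : Type} : HForm P Nom → Set ℕ
  | .bot => ∅
  | .prop _ => ∅
  | .nom _ => ∅
  | .wvar x => {x}
  | .neg φ => φ.free
  | .or φ ψ => φ.free ∪ ψ.free
  | .dia φ => φ.free
  | .bind x φ => φ.free \ {x}
  | .atv x φ => insert x φ.free
  | .atn _ φ => φ.free
  | .exq x φ => φ.free \ {x}

/-- The degree of a hybrid formula. -/
def deg {P Nom : Type} : HForm P Nom → ℕ
  | .bot => 0
  | .prop _ => 0
  | .nom _ => 0
  | .wvar _ => 0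
  | .neg φ => φ.deg
  | .or φ ψ => max φ.deg ψ.deg
  | .dia φ => φ.deg + 1
  | .bind _ φ => φ.deg + 1
  | .atv _ φ => φ.deg
  | .atn _ φ => φ.deg
  | .exq _ φ => φ.deg + 1

end HForm

/-- The hybrid language features beyond basic modal logic: `@`, `↓`, `∃`, nominals. -/
inductive Feature : Type
  | at_ | bind | exq | nom
deriving DecidableEq

/-- Membership of a hybrid formula in the `F`-fragment: it uses only operators from `F`,
and nominals only if `Feature.nom ∈ F`. -/
def HForm.inFragment {P Nom : Type} (F : Set Feature) : HForm P Nom → Prop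
  | .bot => True
  | .prop _ => True
  | .nom _ => Feature.nom ∈ F
  | .wvar _ => True
  | .neg φ => φ.inFragment F
  | .or φ ψ => φ.inFragment F ∧ ψ.inFragment F
  | .dia φ => φ.inFragment F
  | .bind _ φ => Feature.bind ∈ F ∧ φ.inFragment F
  | .atv _ φ => Feature.at_ ∈ F ∧ φ.inFragment F
  | .atn _ φ => Feature.at_ ∈ F ∧ Feature.nom ∈ F ∧ φ.inFragment F
  | .exq _ φ => Feature.exq ∈ F ∧ φ.inFragment F

/-- Hybrid satisfaction `M, ν, m ⊩ φ`. -/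
def HSat {P Nom : Type} (M : Kripke P Nom) : (ℕ → M.W) → M.W → HForm P Nom → Prop
  | _, _, .bot => False
  | _, m, .prop p => M.V p m
  | _, m, .nom s => m = M.nom s
  | ν, m, .wvar x => m = ν x
  | ν, m, .neg φ => ¬ HSat M ν m φ
  | ν, m, .or φ ψ => HSat M ν m φ ∨ HSat M ν m ψ
  | ν, m, .dia φ => ∃ m', M.R m m' ∧ HSat M ν m' φ
  | ν, m, .bind x φ => HSat M (Function.update ν x m) m φ
  | ν, m, .atv x φ => HSat M ν (ν x) φ
  | ν, m, .atn s φ => HSat M ν (M.nom s) φ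
  | ν, m, .exq x φ => ∃ m' : M.W, HSat M (Function.update ν x m') m φ

/-- Satisfaction of a hybrid sentence: `M, m ⊩ φ` (the assignment is irrelevant). -/
def HSatS {P Nom : Type} (M : Kripke P Nom) (m : M.W) (φ : HForm P Nom) : Prop :=
  ∀ ν : ℕ → M.W, HSat M ν m φ

/-- `F`-elementary equivalence of pointed Kripke structures. -/
def FElemEquiv {P Nom : Type} (F : Set Feature) (M : Kripke P Nom) (m : M.W)
    (N : Kripke P Nom) (n : N.W) : Prop :=
  ∀ ψ : HForm P Nom, ψ.inFragment F → ψ.free = ∅ → (HSatS M m ψ ↔ HSatS N n ψ)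

/-! ## First-order logic over the corresponding signature `Σ°` -/

/-- First-order variables: the world variables `Sum.inl n` together with the two
designated variables `x = Sum.inr false` and `y = Sum.inr true`. -/
abbrev FVar : Type := ℕ ⊕ Bool

/-- First-order terms over `Σ°` with variables from `V`: variables and nominal constants. -/
inductive FOTerm (Nom V : Type) : Type
  | var (v : V)
  | nom (s : Nom)

/-- First-order formulas over `Σ°` (one binary relation `R`, a unary predicate for each
propositional variable, a constant for each nominal), with variables from `V`. -/
inductive FOForm (P Nom V : Type) : Type
  | bot
  | pred (p : P) (t : FOTerm Nom V)
  | rel (t u : FOTerm Nom V)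
  | eq (t u : FOTerm Nom V)
  | neg (φ : FOForm P Nom V)
  | or (φ ψ : FOForm P Nom V)
  | ex (v : V) (φ : FOForm P Nom V)

/-- First-order conjunction, `φ ∧ ψ := ¬(¬φ ∨ ¬ψ)`. -/
def FOForm.and {P Nom V : Type} (φ ψ : FOForm P Nom V) : FOForm P Nom V :=
  .neg (.or (.neg φ) (.neg ψ))

/-- Value of a term under an assignment, in a Kripke structure viewed as a `Σ°`-structure. -/
def FOTerm.val {P Nom V : Type} (M : Kripke P Nom) (g : V → M.W) : FOTerm Nom V → M.W
  | .var v => g v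
  | .nom s => M.nom s

/-- First-order satisfaction in a Kripke structure viewed as a `Σ°`-structure. -/
def FOSat {P Nom V : Type} [DecidableEq V] (M : Kripke P Nom) (g : V → M.W) :
    FOForm P Nom V → Prop
  | .bot => False
  | .pred p t => M.V p (t.val M g)
  | .rel t u => M.R (t.val M g) (u.val M g)
  | .eq t u => t.val M g = u.val M g
  | .neg φ => ¬ FOSat M g φ
  | .or φ ψ => FOSat M g φ ∨ FOSat M g ψ
  | .ex v φ => ∃ w : M.W, FOSat M (Function.update g v w) φ

/-- Variables of a first-order term. -/
def FOTerm.fvars {Nom V : Type} : FOTerm Nom V → Set V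
  | .var v => {v}
  | .nom _ => ∅

/-- Free variables of a first-order formula. -/
def FOForm.free {P Nom V : Type} : FOForm P Nom V → Set V
  | .bot => ∅
  | .pred _ t => t.fvars
  | .rel t u => t.fvars ∪ u.fvars
  | .eq t u => t.fvars ∪ u.fvars
  | .neg φ => φ.free
  | .or φ ψ => φ.free ∪ ψ.free
  | .ex v φ => φ.free \ {v}

/-- The standard translation `stdTr b φ`; `b : Bool` chooses the current designated
variable (`false` for `x`, `true` for `y`). -/
def stdTr {P Nom : Type} : Bool → HForm P Nom → FOForm P Nom FVar
  | b, .bot => .bot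
  | b, .prop p => .pred p (.var (Sum.inr b))
  | b, .nom s => .eq (.nom s) (.var (Sum.inr b))
  | b, .wvar z => .eq (.var (Sum.inl z)) (.var (Sum.inr b))
  | b, .neg φ => .neg (stdTr b φ)
  | b, .or φ ψ => .or (stdTr b φ) (stdTr b ψ)
  | b, .dia φ => .ex (Sum.inr (!b))
      (FOForm.and (.rel (.var (Sum.inr b)) (.var (Sum.inr (!b)))) (stdTr (!b) φ))
  | b, .bind z φ => .ex (Sum.inl z)
      (FOForm.and (.eq (.var (Sum.inl z)) (.var (Sum.inr b))) (stdTr b φ))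
  | b, .atv z φ => .ex (Sum.inr (!b))
      (FOForm.and (.eq (.var (Sum.inr (!b))) (.var (Sum.inl z))) (stdTr (!b) φ))
  | b, .atn s φ => .ex (Sum.inr (!b))
      (FOForm.and (.eq (.var (Sum.inr (!b))) (.nom s)) (stdTr (!b) φ))
  | b, .exq z φ => .ex (Sum.inl z) (stdTr b φ)

/-- `M ⊨ φ[m]`: satisfaction of a first-order formula whose free variable is the
designated variable `x = Sum.inr false`, under the assignment sending `x` to `m`. -/
def FOSatAt {P Nom : Type} (M : Kripke P Nom) (m : M.W) (φ : FOForm P Nom FVar) : Prop :=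
  ∀ g : FVar → M.W, g (Sum.inr false) = m → FOSat M g φ

/-! ## Bisimulations -/

/-- Ordinary bisimulations between Kripke structures. -/
def IsBisim {P Nom : Type} (M N : Kripke P Nom) (B : M.W → N.W → Prop) : Prop :=
  ∀ m n, B m n →
    (∀ p, M.V p m ↔ N.V p n) ∧
    (∀ m', M.R m m' → ∃ n', N.R n n' ∧ B m' n') ∧
    (∀ n', N.R n n' → ∃ m', M.R m m' ∧ B m' n')

/-- Quasi-injectivity of a bisimulation. -/
def QuasiInjective {P Nom : Type} (M N : Kripke P Nom) (B : M.W → N.W → Prop) : Prop :=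
  (∀ m n n', B m n → B m n' → n ≠ n' →
     ¬ Relation.ReflTransGen N.R n n' ∧ ¬ Relation.ReflTransGen N.R n' n) ∧
  (∀ m m' n, B m n → B m' n → m ≠ m' →
     ¬ Relation.ReflTransGen M.R m m' ∧ ¬ Relation.ReflTransGen M.R m' m)

/-- The type of relations `B_k ⊆ (M^k × M) × (N^k × N)`. -/
abbrev KRel {P Nom : Type} (M N : Kripke P Nom) (k : ℕ) : Type :=
  (Fin k → M.W) → M.W → (Fin k → N.W) → N.W → Prop

section BisimConds

variable {P Nom : Type} (M N : Kripke P Nom) {k : ℕ}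

/-- Condition (prop). -/
def PropCond (B : KRel M N k) : Prop :=
  ∀ mb m nb n, B mb m nb n → ∀ p, M.V p m ↔ N.V p n

/-- Condition (wvar). -/
def WvarCond (B : KRel M N k) : Prop :=
  ∀ mb m nb n, B mb m nb n → ∀ j : Fin k, mb j = m ↔ nb j = n

/-- Condition (forth). -/
def ForthCond (B : KRel M N k) : Prop :=
  ∀ mb m nb n, B mb m nb n → ∀ m', M.R m m' → ∃ n', N.R n n' ∧ B mb m' nb n'

/-- Condition (back). -/
def BackCond (B : KRel M N k) : Prop :=
  ∀ mb m nb n, B mb m nb n → ∀ n', N.R n n' → ∃ m', M.R m m' ∧ B mb m' nb n'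

/-- Condition (nom). -/
def NomCond (B : KRel M N k) : Prop :=
  ∀ mb m nb n, B mb m nb n → ∀ s : Nom, m = M.nom s ↔ n = N.nom s

/-- Condition (atv). -/
def AtvCond (B : KRel M N k) : Prop :=
  ∀ mb m nb n, B mb m nb n → ∀ j : Fin k, B mb (mb j) nb (nb j)

/-- Condition (atn). -/
def AtnCond (B : KRel M N k) : Prop :=
  ∀ mb m nb n, B mb m nb n → ∀ s : Nom, B mb (M.nom s) nb (N.nom s)

/-- Condition (bind). -/
def BindCond (B : KRel M N k) : Prop :=
  ∀ mb m nb n, B mb m nb n → ∀ j : Fin k,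
    B (Function.update mb j m) m (Function.update nb j n) n

/-- Condition (ex). -/
def ExCond (B : KRel M N k) : Prop :=
  ∀ mb m nb n, B mb m nb n → ∀ j : Fin k,
    (∀ u : M.W, ∃ u' : N.W, B (Function.update mb j u) m (Function.update nb j u') n) ∧
    (∀ u' : N.W, ∃ u : M.W, B (Function.update mb j u) m (Function.update nb j u') n)

/-- A `k`-bisimulation: conditions (prop), (wvar), (forth), (back). -/
def IsKBisim (B : KRel M N k) : Prop :=
  PropCond M N B ∧ WvarCond M N B ∧ ForthCond M N B ∧ BackCond M N B

/-- The conditions `cond(F)` for a feature set `F`, for a single relation `B_k`. -/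
def SatisfiesConds (F : Set Feature) (B : KRel M N k) : Prop :=
  (Feature.nom ∈ F → NomCond M N B) ∧
  (Feature.bind ∈ F → BindCond M N B) ∧
  (Feature.at_ ∈ F → AtvCond M N B) ∧
  (Feature.exq ∈ F → ExCond M N B) ∧
  (Feature.at_ ∈ F → Feature.nom ∈ F → AtnCond M N B)

end BisimConds

/-- An `F`-ω-bisimulation: a non-empty family `(B_k)` of `k`-bisimulations satisfying
(ext) and all the conditions in `cond(F)`. -/
def IsFOmegaBisim {P Nom : Type} (F : Set Feature) (M N : Kripke P Nom)
    (B : (k : ℕ) → KRel M N k) : Prop :=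
  (∀ k, IsKBisim M N (B k)) ∧
  (∃ k mb m nb n, B k mb m nb n) ∧
  (∀ k (mb : Fin k → M.W) m nb n, B k mb m nb n →
     B (k+1) (Fin.snoc mb m) m (Fin.snoc nb n) n) ∧
  (∀ k, SatisfiesConds M N F (B (k : ℕ)))

/-! ## `(k,ℓ)`- and `(ω,ℓ)`-bisimulations -/

section KL

variable {P Nom : Type} (M N : Kripke P Nom)

/-- A basic `(k,ℓ)`-bisimulation from `M` to `N` (the relations `Z i` for `i ≤ ℓ`). -/
def IsBasicKLBisim (k ℓ : ℕ) (Z : ℕ → KRel M N k) : Prop :=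
  (∀ i ≤ ℓ, PropCond M N (Z i) ∧ WvarCond M N (Z i)) ∧
  (∀ i, 0 < i → i ≤ ℓ → ∀ mb m nb n, Z (i-1) mb m nb n →
    (∀ u, M.R m u → ∃ u', N.R n u' ∧ Z i mb u nb u') ∧
    (∀ u', N.R n u' → ∃ u, M.R m u ∧ Z i mb u nb u'))

/-- The conditions `cond(F)` for a `(k,ℓ)`-bisimulation: (nom), (atv), (atn) are
required within each `Z i` (`i ≤ ℓ`), whereas (bind) and (ex) pass from `Z (i-1)`
to `Z i` for `0 < i ≤ ℓ`. -/
def KLSatisfiesConds (F : Set Feature) (k ℓ : ℕ) (Z : ℕ → KRel M N k) : Prop :=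
  (Feature.nom ∈ F → ∀ i ≤ ℓ, NomCond M N (Z i)) ∧
  (Feature.at_ ∈ F → ∀ i ≤ ℓ, AtvCond M N (Z i)) ∧
  (Feature.at_ ∈ F → Feature.nom ∈ F → ∀ i ≤ ℓ, AtnCond M N (Z i)) ∧
  (Feature.bind ∈ F → ∀ i, 0 < i → i ≤ ℓ → ∀ mb m nb n, Z (i-1) mb m nb n →
     ∀ j : Fin k, Z i (Function.update mb j m) m (Function.update nb j n) n) ∧
  (Feature.exq ∈ F → ∀ i, 0 < i → i ≤ ℓ → ∀ mb m nb n, Z (i-1) mb m nb n →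
     ∀ j : Fin k,
       (∀ u : M.W, ∃ u' : N.W, Z i (Function.update mb j u) m (Function.update nb j u') n) ∧
       (∀ u' : N.W, ∃ u : M.W, Z i (Function.update mb j u) m (Function.update nb j u') n))

/-- An `F`-`(k,ℓ)`-bisimulation. -/
def IsFKLBisim (F : Set Feature) (k ℓ : ℕ) (Z : ℕ → KRel M N k) : Prop :=
  IsBasicKLBisim M N k ℓ Z ∧ KLSatisfiesConds M N F k ℓ Z

/-- An `F`-`(ω,ℓ)`-bisimulation: a system `(Z^k_i)_{i ≤ ℓ, k ∈ ω}` of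
`F`-`(k,ℓ)`-bisimulations satisfying the extensibility condition (ext). -/
def IsFOmegaLBisim (F : Set Feature) (ℓ : ℕ)
    (Z : (k : ℕ) → ℕ → KRel M N k) : Prop :=
  (∀ k, IsFKLBisim M N F k ℓ (Z k)) ∧
  (∀ k i, 0 < i → i ≤ ℓ → ∀ (mb : Fin k → M.W) m nb n, Z k (i-1) mb m nb n →
     Z (k+1) i (Fin.snoc mb m) m (Fin.snoc nb n) n)

end KL
/-!
A formula of the `{↓}`-fragment only compares the current state with states recorded earlier on the
same path, and a quasi-injective bisimulation is injective on such pairs; hence invariance.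

Conversely, let `φ` be invariant. The equivalence of two pointed structures up to `l` rounds of the
`{↓}`-game is described by finitely many formulas, so it suffices that `φ` is preserved by it for
some `l`. Otherwise an ultraproduct of counterexamples gives a bisimulation with unbounded histories
between structures that disagree on `φ`, and by Löwenheim–Skolem these may be taken countable.
Recording all states of a strongly connected component one by one, back and forth as in Cantor's
theorem, then matches it injectively with a component of the other structure. After unravelling both
structures along their strongly connected components, these matchings form a quasi-injective
bisimulation, contradicting invariance.
-/

section

open Filter Relation

variable {P Nom V : Type}

/-! ### First-order formulas -/

theorem FOTerm.val_congr {M : Kripke P Nom} {g g' : V → M.W} {t : FOTerm Nom V}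
    (h : Set.EqOn g g' t.fvars) : t.val M g = t.val M g' := by
  cases t with
  | var v => exact h rfl
  | nom s => rfl

theorem eqOn_update_of_eqOn_diff {α β : Type*} [DecidableEq α] {s : Set α} {f g : α → β} {a : α}
    (h : Set.EqOn f g (s \ {a})) (b : β) :
    Set.EqOn (Function.update f a b) (Function.update g a b) s := by
  intro i hi
  by_cases hia : i = a
  · simp [hia]
  · simp [hia, h ⟨hi, hia⟩]

theorem fosat_congr [DecidableEq V] {M : Kripke P Nom} {φ : FOForm P Nom V} {g g' : V → M.W}
    (h : Set.EqOn g g' φ.free) : FOSat M g φ ↔ FOSat M g' φ := by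
  induction φ generalizing g g' with
  | bot => exact Iff.rfl
  | pred p t => simp only [FOSat, FOTerm.val_congr h]
  | rel t u | eq t u =>
    obtain ⟨ht, hu⟩ := Set.eqOn_union.1 h
    simp only [FOSat, FOTerm.val_congr ht, FOTerm.val_congr hu]
  | neg φ ih => exact not_congr (ih h)
  | or φ ψ ihφ ihψ =>
    obtain ⟨hφ, hψ⟩ := Set.eqOn_union.1 h
    exact or_congr (ihφ hφ) (ihψ hψ)
  | ex v φ ih => exact exists_congr fun w => ih (eqOn_update_of_eqOn_diff h w)

theorem FOTerm.finite_fvars (t : FOTerm Nom V) : t.fvars.Finite := by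
  cases t with
  | var v => exact Set.finite_singleton v
  | nom s => exact Set.finite_empty

theorem FOForm.finite_free (φ : FOForm P Nom V) : φ.free.Finite := by
  induction φ with
  | bot => exact Set.finite_empty
  | pred _ t => exact t.finite_fvars
  | rel t u | eq t u => exact t.finite_fvars.union u.finite_fvars
  | neg _ ih => exact ih
  | or _ _ ihφ ihψ => exact ihφ.union ihψ
  | ex _ _ ih => exact ih.sdiff

theorem fosat_and [DecidableEq V] {M : Kripke P Nom} {g : V → M.W} {φ ψ : FOForm P Nom V} :
    FOSat M g (φ.and ψ) ↔ FOSat M g φ ∧ FOSat M g ψ := by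
  simp only [FOForm.and, FOSat, not_or, not_not]

theorem hsat_and {M : Kripke P Nom} {ν : ℕ → M.W} {m : M.W} {φ ψ : HForm P Nom} :
    HSat M ν m (φ.and ψ) ↔ HSat M ν m φ ∧ HSat M ν m ψ := by
  simp only [HForm.and, HSat, not_or, not_not]

theorem fosatAt_iff_fosat {M : Kripke P Nom} {φ : FOForm P Nom FVar}
    (hfree : φ.free ⊆ {Sum.inr false}) (g : FVar → M.W) :
    FOSatAt M (g (Sum.inr false)) φ ↔ FOSat M g φ := by
  refine ⟨fun h => h g rfl, fun h g' hg' => (fosat_congr ?_).1 h⟩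
  exact Set.EqOn.mono hfree (Set.eqOn_singleton.2 hg'.symm)

/-- The propositional variables occurring in a first-order formula. -/
def FOForm.preds : FOForm P Nom V → List P
  | .bot => []
  | .pred p _ => [p]
  | .rel _ _ => []
  | .eq _ _ => []
  | .neg φ => φ.preds
  | .or φ ψ => φ.preds ++ ψ.preds
  | .ex _ φ => φ.preds

/-- The structure `M` with every propositional variable outside `Q` made false; it stands for the
reduct of `M` to the signature `(Q, Nom)`. -/
abbrev Kripke.restrict (M : Kripke P Nom) (Q : Set P) : Kripke P Nom where
  W := M.W
  R := M.R
  V p w := p ∈ Q ∧ M.V p w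
  nom := M.nom

theorem fosat_restrict_iff [DecidableEq V] {M : Kripke P Nom} {Q : Set P} {φ : FOForm P Nom V}
    (hQ : ∀ p ∈ φ.preds, p ∈ Q) (g : V → M.W) : FOSat (M.restrict Q) g φ ↔ FOSat M g φ := by
  have val_eq (g : V → M.W) (t : FOTerm Nom V) : t.val (M.restrict Q) g = t.val M g := by
    cases t <;> rfl
  induction φ generalizing g with
  | bot => exact Iff.rfl
  | pred p t => simp only [FOSat, val_eq, hQ p (List.mem_singleton_self p), true_and]
  | rel t u | eq t u => simp only [FOSat, val_eq]
  | neg φ ih => exact not_congr (ih hQ g)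
  | or φ ψ ihφ ihψ =>
    obtain ⟨hφ, hψ⟩ := List.forall_mem_append.1 hQ
    exact or_congr (ihφ hφ g) (ihψ hψ g)
  | ex v φ ih => exact exists_congr fun w => ih hQ _

/-! ### The standard translation and invariance -/

theorem fosat_stdTr {M : Kripke P Nom} (ψ : HForm P Nom) (b : Bool) (g : FVar → M.W) :
    FOSat M g (stdTr b ψ) ↔ HSat M (g ∘ Sum.inl) (g (Sum.inr b)) ψ := by
  induction ψ generalizing b g with
  | bot | prop p => exact Iff.rfl
  | nom s | wvar x => exact eq_comm
  | neg φ ih => exact not_congr (ih b g)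
  | or φ ψ ihφ ihψ => exact or_congr (ihφ b g) (ihψ b g)
  | dia φ ih =>
    have hb : (Sum.inr b : FVar) ≠ Sum.inr (!b) := by simp
    simp [stdTr, FOSat, HSat, FOTerm.val, fosat_and, ih, hb]
  | bind x φ ih => simp [stdTr, FOSat, HSat, FOTerm.val, fosat_and, ih]
  | atv x φ ih => simp [stdTr, FOSat, HSat, FOTerm.val, fosat_and, ih]
  | atn s φ ih => simp [stdTr, FOSat, HSat, FOTerm.val, fosat_and, ih]
  | exq x φ ih => simp [stdTr, FOSat, HSat, ih]

section Invariance

variable {M N : Kripke P Nom} {B : M.W → N.W → Prop}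

theorem QuasiInjective.eq_iff (hB : QuasiInjective M N B) {m c : M.W} {n d : N.W}
    (hmn : B m n) (hcd : B c d) (hm : ReflTransGen M.R c m) (hn : ReflTransGen N.R d n) :
    m = c ↔ n = d := by
  constructor
  · rintro rfl
    by_contra hne
    exact (hB.1 m n d hmn hcd hne).2 hn
  · rintro rfl
    by_contra hne
    exact (hB.2 m c n hmn hcd hne).2 hm

/-- The induction behind invariance: quasi-injectivity makes world variables agree because their
values always lie on the path travelled so far. -/
theorem hsat_iff_of_quasiInjective (hbis : IsBisim M N B) (hqi : QuasiInjective M N B)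
    {ψ : HForm P Nom} (hψ : ψ.inFragment {Feature.bind}) {ν : ℕ → M.W} {μ : ℕ → N.W}
    {m : M.W} {n : N.W} (hmn : B m n)
    (hpath : ∀ x ∈ ψ.free,
      B (ν x) (μ x) ∧ ReflTransGen M.R (ν x) m ∧ ReflTransGen N.R (μ x) n) :
    HSat M ν m ψ ↔ HSat N μ n ψ := by
  induction ψ generalizing ν μ m n with
  | bot => exact Iff.rfl
  | prop p => exact (hbis m n hmn).1 p
  | nom s => cases hψ
  | wvar x =>
    obtain ⟨hx, hm, hn⟩ := hpath x rfl
    exact hqi.eq_iff hmn hx hm hn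
  | neg φ ih => exact not_congr (ih hψ hmn hpath)
  | or φ χ ihφ ihχ =>
    exact or_congr (ihφ hψ.1 hmn fun x hx => hpath x (Or.inl hx))
      (ihχ hψ.2 hmn fun x hx => hpath x (Or.inr hx))
  | dia φ ih =>
    obtain ⟨-, forth, back⟩ := hbis m n hmn
    have step {m' n'} (hm : M.R m m') (hn : N.R n n') (hmn' : B m' n') :
        HSat M ν m' φ ↔ HSat N μ n' φ :=
      ih hψ hmn' fun x hx => ⟨(hpath x hx).1, (hpath x hx).2.1.tail hm, (hpath x hx).2.2.tail hn⟩
    constructor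
    · rintro ⟨m', hm, hφ⟩
      obtain ⟨n', hn, hmn'⟩ := forth m' hm
      exact ⟨n', hn, (step hm hn hmn').1 hφ⟩
    · rintro ⟨n', hn, hφ⟩
      obtain ⟨m', hm, hmn'⟩ := back n' hn
      exact ⟨m', hm, (step hm hn hmn').2 hφ⟩
  | bind z φ ih =>
    refine ih hψ.2 hmn fun x hx => ?_
    by_cases hxz : x = z
    · subst hxz
      simp only [Function.update_self]
      exact ⟨hmn, .refl, .refl⟩
    · simp only [Function.update_of_ne hxz]
      exact hpath x ⟨hx, hxz⟩
  | atv x φ => cases hψ.1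
  | atn s φ => cases hψ.1
  | exq x φ => cases hψ.1

end Invariance

/-- Invariance of a first-order formula `φ(x)` under quasi-injective bisimulations. -/
def InvariantUnderQuasiInjective (φ : FOForm P Nom FVar) : Prop :=
  ∀ (M N : Kripke P Nom) (B : M.W → N.W → Prop), IsBisim M N B → QuasiInjective M N B →
    ∀ (m : M.W) (n : N.W), B m n → (FOSatAt M m φ ↔ FOSatAt N n φ)

theorem invariantUnderQuasiInjective_of_iff_stdTr {φ : FOForm P Nom FVar} {ψ : HForm P Nom}
    (hψ : ψ.inFragment {Feature.bind}) (hclosed : ψ.free = ∅)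
    (hfree : φ.free ⊆ {Sum.inr false})
    (h : ∀ (M : Kripke P Nom) (g : FVar → M.W), FOSat M g φ ↔ FOSat M g (stdTr false ψ)) :
    InvariantUnderQuasiInjective φ := by
  intro M N B hbis hqi m n hmn
  rw [fosatAt_iff_fosat hfree fun _ => m, fosatAt_iff_fosat hfree fun _ => n, h, h,
    fosat_stdTr, fosat_stdTr]
  exact hsat_iff_of_quasiInjective hbis hqi hψ hmn (by simp [hclosed])

/-! ### The bounded back-and-forth game -/

section Game

/-- `m` and `n` agree on propositional variables and on being the `i`-th recorded state, for every
entry of the history `h` of pairs recorded by `↓`. -/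
def AtomicEquiv (M N : Kripke P Nom) (h : List (M.W × N.W)) (m : M.W) (n : N.W) : Prop :=
  (∀ p, M.V p m ↔ N.V p n) ∧ ∀ a ∈ h, a.1 = m ↔ a.2 = n

/-- Duplicator survives `l` rounds of the `{↓}`-game from `(m, n)` with history `h`: each round
either moves along the accessibility relations or records the current pair. -/
def BoundedEquiv (M N : Kripke P Nom) : ℕ → List (M.W × N.W) → M.W → N.W → Prop
  | 0, h, m, n => AtomicEquiv M N h m n
  | l + 1, h, m, n => AtomicEquiv M N h m n ∧
      (∀ m', M.R m m' → ∃ n', N.R n n' ∧ BoundedEquiv M N l h m' n') ∧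
      (∀ n', N.R n n' → ∃ m', M.R m m' ∧ BoundedEquiv M N l h m' n') ∧
      BoundedEquiv M N l ((m, n) :: h) m n

theorem BoundedEquiv.atomic {M N : Kripke P Nom} {l : ℕ} {h : List (M.W × N.W)} {m : M.W}
    {n : N.W} (hmn : BoundedEquiv M N l h m n) : AtomicEquiv M N h m n := by
  cases l with
  | zero => exact hmn
  | succ l => exact hmn.1

/-- The conjunctions that contain, for each formula of a list, either it or its negation. -/
def HForm.completeConjs : List (HForm P Nom) → List (HForm P Nom)
  | [] => [.neg .bot]
  | γ :: Γ => (completeConjs Γ).flatMap fun t => [γ.and t, (HForm.neg γ).and t]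

theorem HForm.mem_completeConjs_cons {γ t : HForm P Nom} {Γ : List (HForm P Nom)} :
    t ∈ completeConjs (γ :: Γ) ↔
      ∃ t' ∈ completeConjs Γ, t = γ.and t' ∨ t = (HForm.neg γ).and t' := by
  simp [completeConjs]

theorem exists_completeConj (M : Kripke P Nom) (ν : ℕ → M.W) (m : M.W) (Γ : List (HForm P Nom)) :
    ∃ t ∈ HForm.completeConjs Γ, HSat M ν m t := by
  induction Γ with
  | nil => exact ⟨_, List.mem_singleton_self _, id⟩
  | cons γ Γ ih =>
    obtain ⟨t, ht, hsat⟩ := ih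
    by_cases hγ : HSat M ν m γ
    · exact ⟨_, HForm.mem_completeConjs_cons.2 ⟨t, ht, .inl rfl⟩, hsat_and.2 ⟨hγ, hsat⟩⟩
    · exact ⟨_, HForm.mem_completeConjs_cons.2 ⟨t, ht, .inr rfl⟩, hsat_and.2 ⟨hγ, hsat⟩⟩

theorem hsat_iff_of_completeConj {M N : Kripke P Nom} {ν : ℕ → M.W} {m : M.W} {μ : ℕ → N.W}
    {n : N.W} {Γ : List (HForm P Nom)} {t : HForm P Nom} (ht : t ∈ HForm.completeConjs Γ)
    (hm : HSat M ν m t) (hn : HSat N μ n t) : ∀ γ ∈ Γ, HSat M ν m γ ↔ HSat N μ n γ := by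
  induction Γ generalizing t with
  | nil => simp
  | cons γ Γ ih =>
    obtain ⟨t', ht', rfl | rfl⟩ := HForm.mem_completeConjs_cons.1 ht <;>
      rw [hsat_and] at hm hn <;>
      refine List.forall_mem_cons.2 ⟨?_, ih ht' hm.2 hn.2⟩
    · exact iff_of_true hm.1 hn.1
    · exact iff_of_false hm.1 hn.1

/-- Finite disjunctions. -/
def HForm.disj : List (HForm P Nom) → HForm P Nom
  | [] => .bot
  | t :: l => .or t (disj l)

theorem hsat_disj {M : Kripke P Nom} {ν : ℕ → M.W} {m : M.W} {l : List (HForm P Nom)} :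
    HSat M ν m (.disj l) ↔ ∃ t ∈ l, HSat M ν m t := by
  induction l with
  | nil => simp [HForm.disj, HSat]
  | cons t l ih => simp [HForm.disj, HSat, ih]

/-- Formulas of the `{↓}`-fragment whose free world variables are among the first `k`. -/
def HForm.IsBindForm (k : ℕ) (γ : HForm P Nom) : Prop :=
  γ.inFragment {Feature.bind} ∧ γ.free ⊆ Set.Iio k

namespace HForm.IsBindForm

variable {k : ℕ}

theorem or {γ δ : HForm P Nom} (hγ : γ.IsBindForm k) (hδ : δ.IsBindForm k) :
    (HForm.or γ δ).IsBindForm k :=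
  ⟨⟨hγ.1, hδ.1⟩, Set.union_subset hγ.2 hδ.2⟩

theorem bind {γ : HForm P Nom} (hγ : γ.IsBindForm (k + 1)) : (HForm.bind k γ).IsBindForm k := by
  refine ⟨⟨rfl, hγ.1⟩, fun i hi => ?_⟩
  exact lt_of_le_of_ne (Nat.lt_succ_iff.1 (hγ.2 hi.1)) hi.2

theorem completeConjs {Γ : List (HForm P Nom)} (hΓ : ∀ γ ∈ Γ, γ.IsBindForm k) :
    ∀ t ∈ HForm.completeConjs Γ, t.IsBindForm k := by
  induction Γ with
  | nil =>
    intro t ht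
    obtain rfl := List.mem_singleton.1 ht
    exact ⟨trivial, Set.empty_subset _⟩
  | cons γ Γ ih =>
    obtain ⟨hγ, hΓ⟩ := List.forall_mem_cons.1 hΓ
    intro t ht
    obtain ⟨t', ht', rfl | rfl⟩ := HForm.mem_completeConjs_cons.1 ht <;>
      exact or hγ (ih hΓ t' ht')

theorem disj {l : List (HForm P Nom)} (hl : ∀ t ∈ l, t.IsBindForm k) :
    (HForm.disj l).IsBindForm k := by
  induction l with
  | nil => exact ⟨trivial, Set.empty_subset _⟩
  | cons t l ih =>
    obtain ⟨ht, hl⟩ := List.forall_mem_cons.1 hl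
    exact or ht (ih hl)

end HForm.IsBindForm

/-- The atomic formulas over the propositional variables in `Q` and the first `k` world
variables. -/
def atomicFormulas (Q : List P) (k : ℕ) : List (HForm P Nom) :=
  Q.map .prop ++ (List.range k).map .wvar

/-- Finitely many `{↓}`-formulas describing the `l`-round game over the propositional variables
in `Q` with a history of length `k`. -/
def gameFormulas (Q : List P) : ℕ → ℕ → List (HForm P Nom)
  | 0, k => atomicFormulas Q k
  | l + 1, k => atomicFormulas Q k ++
      ((HForm.completeConjs (gameFormulas Q l k)).map .dia ++
        (gameFormulas Q l (k + 1)).map (.bind k))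

variable {Q : List P}

theorem isBindForm_atomicFormulas {k : ℕ} :
    ∀ γ ∈ atomicFormulas (Nom := Nom) Q k, γ.IsBindForm k := by
  simp [atomicFormulas, or_imp, forall_and, HForm.IsBindForm, HForm.inFragment, HForm.free]

theorem isBindForm_gameFormulas {l k : ℕ} :
    ∀ γ ∈ gameFormulas (Nom := Nom) Q l k, γ.IsBindForm k := by
  induction l generalizing k with
  | zero => exact isBindForm_atomicFormulas
  | succ l ih =>
    simp only [gameFormulas, List.forall_mem_append, List.forall_mem_map]
    exact ⟨isBindForm_atomicFormulas, HForm.IsBindForm.completeConjs ih, fun γ hγ => (ih γ hγ).bind⟩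

section Agreement

variable {M N : Kripke P Nom} {ν : ℕ → M.W} {μ : ℕ → N.W} {h : List (M.W × N.W)} {m : M.W}
  {n : N.W}

theorem atomicEquiv_of_agree (hνμ : ∀ a ∈ h, ∃ i < h.length, ν i = a.1 ∧ μ i = a.2)
    (hagree : ∀ γ ∈ atomicFormulas Q h.length, HSat M ν m γ ↔ HSat N μ n γ) :
    AtomicEquiv (M.restrict {p | p ∈ Q}) (N.restrict {p | p ∈ Q}) h m n := by
  simp only [atomicFormulas, List.forall_mem_append, List.forall_mem_map, HSat] at hagree
  refine ⟨fun p => and_congr_right fun hp => hagree.1 p hp, fun a ha => ?_⟩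
  obtain ⟨i, hi, hνi, hμi⟩ := hνμ a ha
  rw [← hνi, ← hμi, eq_comm, hagree.2 i (List.mem_range.2 hi), eq_comm]

theorem exists_agreeing_successor {Γ : List (HForm P Nom)}
    (hagree : ∀ t ∈ HForm.completeConjs Γ, HSat M ν m (.dia t) → HSat N μ n (.dia t))
    {m' : M.W} (hm : M.R m m') : ∃ n', N.R n n' ∧ ∀ γ ∈ Γ, HSat M ν m' γ ↔ HSat N μ n' γ := by
  obtain ⟨t, ht, hsat⟩ := exists_completeConj M ν m' Γ
  obtain ⟨n', hn, hsat'⟩ := hagree t ht ⟨m', hm, hsat⟩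
  exact ⟨n', hn, hsat_iff_of_completeConj ht hsat hsat'⟩

theorem boundedEquiv_of_agree {l : ℕ} (hνμ : ∀ a ∈ h, ∃ i < h.length, ν i = a.1 ∧ μ i = a.2)
    (hagree : ∀ γ ∈ gameFormulas Q l h.length, HSat M ν m γ ↔ HSat N μ n γ) :
    BoundedEquiv (M.restrict {p | p ∈ Q}) (N.restrict {p | p ∈ Q}) l h m n := by
  induction l generalizing h ν μ m n with
  | zero => exact atomicEquiv_of_agree hνμ hagree
  | succ l ih =>
    simp only [gameFormulas, List.forall_mem_append, List.forall_mem_map] at hagree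
    obtain ⟨hatom, hdia, hbind⟩ := hagree
    refine ⟨atomicEquiv_of_agree hνμ hatom, fun m' hm => ?forth, fun n' hn => ?back, ?record⟩
    case forth =>
      obtain ⟨n', hn, hγ⟩ := exists_agreeing_successor (fun t ht => (hdia t ht).1) hm
      exact ⟨n', hn, ih hνμ hγ⟩
    case back =>
      obtain ⟨m', hm, hγ⟩ := exists_agreeing_successor (fun t ht => (hdia t ht).2) hn
      exact ⟨m', hm, ih hνμ fun γ hΓ => (hγ γ hΓ).symm⟩
    case record =>
      refine ih (ν := Function.update ν h.length m) (μ := Function.update μ h.length n)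
        (List.forall_mem_cons.2 ⟨⟨h.length, by simp⟩, fun a ha => ?_⟩) hbind
      obtain ⟨i, hi, hνi, hμi⟩ := hνμ a ha
      exact ⟨i, hi.trans (Nat.lt_succ_self _), by simp [hi.ne, hνi, hμi]⟩

end Agreement

/-- Only finitely many game formulas describe `l` rounds over the variables of `φ`, so the
disjunction of the complete conjunctions of them that are consistent with `φ` defines `φ`. -/
theorem exists_stdTr_iff_of_boundedEquiv {φ : FOForm P Nom FVar}
    (hfree : φ.free ⊆ {Sum.inr false}) (l : ℕ)
    (hinv : ∀ (M N : Kripke P Nom) (m : M.W) (n : N.W), BoundedEquiv M N l [] m n →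
      FOSatAt M m φ → FOSatAt N n φ) :
    ∃ ψ : HForm P Nom, ψ.inFragment {Feature.bind} ∧ ψ.free = ∅ ∧
      ∀ (M : Kripke P Nom) (g : FVar → M.W), FOSat M g φ ↔ FOSat M g (stdTr false ψ) := by
  classical
  let Γ : List (HForm P Nom) := gameFormulas φ.preds l 0
  let consistent : List (HForm P Nom) := (HForm.completeConjs Γ).filter fun t =>
    ∃ (M : Kripke P Nom) (g : FVar → M.W),
      FOSat M g φ ∧ HSat M (g ∘ Sum.inl) (g (Sum.inr false)) t
  have hbind : (HForm.disj consistent).IsBindForm 0 := .disj fun t ht =>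
    HForm.IsBindForm.completeConjs isBindForm_gameFormulas t (List.mem_of_mem_filter ht)
  refine ⟨HForm.disj consistent, hbind.1, Set.subset_empty_iff.1 (by simpa using hbind.2),
    fun N g => ?_⟩
  rw [fosat_stdTr, hsat_disj]
  constructor
  · intro hφ
    obtain ⟨t, ht, hsat⟩ := exists_completeConj N (g ∘ Sum.inl) (g (Sum.inr false)) Γ
    exact ⟨t, List.mem_filter.2 ⟨ht, decide_eq_true ⟨N, g, hφ, hsat⟩⟩, hsat⟩
  · rintro ⟨t, ht, hsat⟩
    obtain ⟨ht, hcons⟩ := List.mem_filter.1 ht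
    obtain ⟨M, g', hφ, hsat'⟩ := of_decide_eq_true hcons
    have hequiv := boundedEquiv_of_agree (h := []) (by simp)
      (hsat_iff_of_completeConj ht hsat' hsat)
    have hpreds : ∀ p ∈ φ.preds, p ∈ {p | p ∈ φ.preds} := fun _ => id
    refine (fosat_restrict_iff hpreds g).1 ((fosatAt_iff_fosat hfree _).1 (hinv _ _ _ _ hequiv ?_))
    exact (fosatAt_iff_fosat hfree _).2 ((fosat_restrict_iff hpreds g').2 hφ)

end Game

/-! ### History bisimulations -/

section HistoryBisim

/-- Bisimulations with history for the `{↓}`-fragment: the unbounded version of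
`BoundedEquiv`, where a history is the list of pairs recorded so far. -/
structure IsHistoryBisim (M N : Kripke P Nom) (Z : List (M.W × N.W) → M.W → N.W → Prop) :
    Prop where
  atomic {h m n} : Z h m n → AtomicEquiv M N h m n
  forth {h m n m'} : Z h m n → M.R m m' → ∃ n', N.R n n' ∧ Z h m' n'
  back {h m n n'} : Z h m n → N.R n n' → ∃ m', M.R m m' ∧ Z h m' n'
  record {h m n} : Z h m n → Z ((m, n) :: h) m n

variable {M N : Kripke P Nom} {Z : List (M.W × N.W) → M.W → N.W → Prop}
  {h : List (M.W × N.W)} {c : M.W} {d : N.W}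

namespace IsHistoryBisim

variable {m w : M.W} {n v : N.W}

protected theorem symm (hZ : IsHistoryBisim M N Z) :
    IsHistoryBisim N M fun h n m => Z (h.map Prod.swap) m n where
  atomic hz := by
    obtain ⟨hV, hh⟩ := hZ.atomic hz
    exact ⟨fun p => (hV p).symm, fun a ha => (hh a.swap (List.mem_map_of_mem ha)).symm⟩
  forth := hZ.back
  back := hZ.forth
  record := hZ.record

theorem forth_reflTransGen (hZ : IsHistoryBisim M N Z) {m' : M.W} (hz : Z h m n)
    (hm : ReflTransGen M.R m m') : ∃ n', ReflTransGen N.R n n' ∧ Z h m' n' := by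
  induction hm with
  | refl => exact ⟨n, .refl, hz⟩
  | tail _ hm ih =>
    obtain ⟨n₁, hn₁, hz₁⟩ := ih
    obtain ⟨n₂, hn₂, hz₂⟩ := hZ.forth hz₁ hm
    exact ⟨n₂, hn₁.tail hn₂, hz₂⟩

theorem eq_right (hZ : IsHistoryBisim M N Z) (hz : Z h w n) (hwv : (w, v) ∈ h) : v = n :=
  ((hZ.atomic hz).2 _ hwv).1 rfl

theorem eq_left (hZ : IsHistoryBisim M N Z) (hz : Z h m v) (hwv : (w, v) ∈ h) : w = m :=
  ((hZ.atomic hz).2 _ hwv).2 rfl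

theorem of_reachable (hZ : IsHistoryBisim M N Z) (hz : Z h c d) (hcw : ReflTransGen M.R c w)
    (hwv : (w, v) ∈ h) : Z h w v := by
  obtain ⟨u, -, hu⟩ := hZ.forth_reflTransGen hz hcw
  rwa [hZ.eq_right hu hwv]

theorem exists_cons_left (hZ : IsHistoryBisim M N Z) (hz : Z h c d) (hcd : (c, d) ∈ h)
    (hw : AntisymmRel (ReflTransGen M.R) c w) :
    ∃ v, AntisymmRel (ReflTransGen N.R) d v ∧ Z ((w, v) :: h) c d := by
  obtain ⟨v, hdv, hwv⟩ := hZ.forth_reflTransGen hz hw.1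
  obtain ⟨d', hvd', hcd'⟩ := hZ.forth_reflTransGen (hZ.record hwv) hw.2
  obtain rfl := hZ.eq_right hcd' (List.mem_cons_of_mem _ hcd)
  exact ⟨v, ⟨hdv, hvd'⟩, hcd'⟩

theorem exists_cons_right (hZ : IsHistoryBisim M N Z) (hz : Z h c d) (hcd : (c, d) ∈ h)
    (hv : AntisymmRel (ReflTransGen N.R) d v) :
    ∃ w, AntisymmRel (ReflTransGen M.R) c w ∧ Z ((w, v) :: h) c d := by
  have := hZ.symm.exists_cons_left (h := h.map Prod.swap) (by simpa using hz)
    (by simpa using hcd) hv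
  simpa using this

end IsHistoryBisim

/-! ### Matching strongly connected components -/

/-- A matching `E` between the strongly connected components of `c` and `d`, any two pairs of
which lie in a common history. -/
structure IsComponentMatching (M N : Kripke P Nom) (Z : List (M.W × N.W) → M.W → N.W → Prop)
    (c : M.W) (d : N.W) (E : M.W → N.W → Prop) : Prop where
  base : E c d
  mem_left {w v} : E w v → AntisymmRel (ReflTransGen M.R) c w
  mem_right {w v} : E w v → AntisymmRel (ReflTransGen N.R) d v
  total_left {w} : AntisymmRel (ReflTransGen M.R) c w → ∃ v, E w v
  total_right {v} : AntisymmRel (ReflTransGen N.R) d v → ∃ w, E w v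
  coherent {w v w' v'} : E w v → E w' v' → ∃ h, Z h w v ∧ (w, v) ∈ h ∧ (w', v') ∈ h

theorem IsComponentMatching.symm {E : M.W → N.W → Prop} (hE : IsComponentMatching M N Z c d E) :
    IsComponentMatching N M (fun h n m => Z (h.map Prod.swap) m n) d c (flip E) where
  base := hE.base
  mem_left := hE.mem_right
  mem_right := hE.mem_left
  total_left := hE.total_right
  total_right := hE.total_left
  coherent hwv hwv' := by
    obtain ⟨h, hz, hmem, hmem'⟩ := hE.coherent hwv hwv'
    exact ⟨h.map Prod.swap, by simpa using hz, List.mem_map_of_mem hmem, List.mem_map_of_mem hmem'⟩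

/-- Histories that relate `c` to `d` and record the pair `(c, d)`, ordered by inclusion: the
forcing conditions for a matching of the components of `c` and `d`. -/
structure HistoryThrough (Z : List (M.W × N.W) → M.W → N.W → Prop) (c : M.W) (d : N.W) where
  pairs : List (M.W × N.W)
  rel : Z pairs c d
  mem : (c, d) ∈ pairs

instance : Preorder (HistoryThrough Z c d) := Preorder.lift fun H => {a | a ∈ H.pairs}

/-- The histories in which `w`, if it belongs to the component of `c`, is matched. -/
def HistoryThrough.cofinalLeft (hZ : IsHistoryBisim M N Z) (w : M.W) :
    Order.Cofinal (HistoryThrough Z c d) where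
  carrier := {H | AntisymmRel (ReflTransGen M.R) c w →
    ∃ v, AntisymmRel (ReflTransGen N.R) d v ∧ (w, v) ∈ H.pairs}
  isCofinal H := by
    by_cases hw : AntisymmRel (ReflTransGen M.R) c w
    · obtain ⟨v, hv, hz⟩ := hZ.exists_cons_left H.rel H.mem hw
      exact ⟨⟨_, hz, List.mem_cons_of_mem _ H.mem⟩, fun _ => ⟨v, hv, List.mem_cons_self⟩,
        fun _ => List.mem_cons_of_mem _⟩
    · exact ⟨H, fun h => absurd h hw, le_rfl⟩

/-- The histories in which `v`, if it belongs to the component of `d`, is matched. -/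
def HistoryThrough.cofinalRight (hZ : IsHistoryBisim M N Z) (v : N.W) :
    Order.Cofinal (HistoryThrough Z c d) where
  carrier := {H | AntisymmRel (ReflTransGen N.R) d v →
    ∃ w, AntisymmRel (ReflTransGen M.R) c w ∧ (w, v) ∈ H.pairs}
  isCofinal H := by
    by_cases hv : AntisymmRel (ReflTransGen N.R) d v
    · obtain ⟨w, hw, hz⟩ := hZ.exists_cons_right H.rel H.mem hv
      exact ⟨⟨_, hz, List.mem_cons_of_mem _ H.mem⟩, fun _ => ⟨w, hw, List.mem_cons_self⟩,
        fun _ => List.mem_cons_of_mem _⟩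
    · exact ⟨H, fun h => absurd h hv, le_rfl⟩

/-- Cantor's back-and-forth on the two components, as a Rasiowa–Sikorski argument. -/
theorem exists_isComponentMatching [Countable M.W] [Countable N.W] (hZ : IsHistoryBisim M N Z)
    (hz : Z h c d) : ∃ E, IsComponentMatching M N Z c d E := by
  have : Encodable (M.W ⊕ N.W) := Encodable.ofCountable _
  let start : HistoryThrough Z c d := ⟨_, hZ.record hz, List.mem_cons_self⟩
  let tasks : M.W ⊕ N.W → Order.Cofinal (HistoryThrough Z c d) :=
    Sum.elim (HistoryThrough.cofinalLeft hZ) (HistoryThrough.cofinalRight hZ)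
  let I := Order.idealOfCofinals start tasks
  refine ⟨fun w v => AntisymmRel (ReflTransGen M.R) c w ∧ AntisymmRel (ReflTransGen N.R) d v ∧
    ∃ H ∈ I, (w, v) ∈ H.pairs, ?_⟩
  refine
    { base := ⟨.rfl, .rfl, start, Order.mem_idealOfCofinals _ _, start.mem⟩
      mem_left := fun hE => hE.1
      mem_right := fun hE => hE.2.1
      total_left := fun {w} hw => ?_
      total_right := fun {v} hv => ?_
      coherent := ?_ }
  · obtain ⟨H, hH, hHI⟩ := Order.cofinal_meets_idealOfCofinals start tasks (Sum.inl w)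
    obtain ⟨v, hv, hmem⟩ := hH hw
    exact ⟨v, hw, hv, H, hHI, hmem⟩
  · obtain ⟨H, hH, hHI⟩ := Order.cofinal_meets_idealOfCofinals start tasks (Sum.inr v)
    obtain ⟨w, hw, hmem⟩ := hH hv
    exact ⟨w, hw, hv, H, hHI, hmem⟩
  · rintro w v w' v' ⟨hw, -, H₁, hH₁, hmem₁⟩ ⟨-, -, H₂, hH₂, hmem₂⟩
    obtain ⟨H, -, h₁, h₂⟩ := I.directed H₁ hH₁ H₂ hH₂
    exact ⟨H.pairs, hZ.of_reachable H.rel hw.1 (h₁ hmem₁), h₁ hmem₁, h₂ hmem₂⟩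

/-- `F` matches steps of `R` inside a strongly connected component with such steps of `S`, and
steps leaving the component with steps of `S` that leave theirs and end in `Y`-related states. -/
structure IsComponentSim {A B : Type} (R : A → A → Prop) (S : B → B → Prop)
    (Y F : A → B → Prop) : Prop where
  unique {w v v'} : F w v → F w v' → v = v'
  stay {w v w'} : F w v → R w w' → ReflTransGen R w' w →
    ∃ v', S v v' ∧ ReflTransGen S v' v ∧ F w' v'
  leave {w v w'} : F w v → R w w' → ¬ ReflTransGen R w' w →
    ∃ v', S v v' ∧ ¬ ReflTransGen S v' v ∧ Y w' v'

theorem IsComponentMatching.isComponentSim {E Y : M.W → N.W → Prop}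
    (hE : IsComponentMatching M N Z c d E) (hZ : IsHistoryBisim M N Z)
    (hY : ∀ {h w v}, Z h w v → Y w v) : IsComponentSim M.R N.R Y E where
  unique hwv hwv' := by
    obtain ⟨h, hz, -, hmem⟩ := hE.coherent hwv hwv'
    exact (hZ.eq_right hz hmem).symm
  stay {w v w'} hwv hR hback := by
    obtain ⟨v', hwv'⟩ := hE.total_left ((hE.mem_left hwv).trans ⟨.single hR, hback⟩)
    obtain ⟨h, hz, -, hmem⟩ := hE.coherent hwv hwv'
    obtain ⟨u, hS, hu⟩ := hZ.forth hz hR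
    obtain rfl := hZ.eq_right hu hmem
    exact ⟨v', hS, ((hE.mem_right hwv').symm.trans (hE.mem_right hwv)).1, hwv'⟩
  leave {w v w'} hwv hR hleave := by
    obtain ⟨h, hz, hmem, -⟩ := hE.coherent hwv hwv
    obtain ⟨v', hS, hz'⟩ := hZ.forth hz hR
    refine ⟨v', hS, fun hback => hleave ?_, hY hz'⟩
    obtain ⟨u, hu, hzu⟩ :=
      hZ.symm.forth_reflTransGen (h := h.map Prod.swap) (by simpa using hz') hback
    obtain rfl := hZ.eq_left (by simpa using hzu) hmem
    exact hu

end HistoryBisim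

/-! ### Unravelling along strongly connected components -/

section Unravelling

/-- Accessibility of the unravelling of a relation along its strongly connected components: a
state `(p, w)` carries the list `p`, latest first, of the states at which a path ending in `w`
has entered a new component. -/
inductive UnravelStep {W : Type} (R : W → W → Prop) : List W × W → List W × W → Prop
  | stay {p w w'} : R w w' → ReflTransGen R w' w → UnravelStep R (p, w) (p, w')
  | leave {p w w'} : R w w' → ¬ ReflTransGen R w' w → UnravelStep R (p, w) (w' :: p, w')

/-- The unravelling of a Kripke structure along its strongly connected components. -/
abbrev Kripke.unravel (M : Kripke P Nom) : Kripke P Nom where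
  W := List M.W × M.W
  R := UnravelStep M.R
  V p x := M.V p x.2
  nom s := ([], M.nom s)

theorem UnravelStep.suffix_and_reachable {W : Type} {R : W → W → Prop} {x y : List W × W}
    (hxy : ReflTransGen (UnravelStep R) x y) :
    x.1 <:+ y.1 ∧ ReflTransGen R x.2 y.2 ∧ (ReflTransGen R y.2 x.2 → x.1 = y.1) := by
  induction hxy with
  | refl => exact ⟨List.suffix_rfl, .refl, fun _ => rfl⟩
  | tail _ hstep ih =>
    obtain ⟨hsuff, hreach, heq⟩ := ih
    cases hstep with
    | stay hR _ => exact ⟨hsuff, hreach.tail hR, fun hback => heq (hback.head hR)⟩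
    | leave hR hleave =>
      exact ⟨hsuff.trans (List.suffix_cons _ _), hreach.tail hR,
        fun hback => absurd (hback.trans hreach) hleave⟩

theorem quasiInjective_of_eq {M N : Kripke P Nom} {B : M.W → N.W → Prop}
    (hright : ∀ {m n n'}, B m n → B m n' → ReflTransGen N.R n n' → n = n')
    (hleft : ∀ {m m' n}, B m n → B m' n → ReflTransGen M.R m m' → m = m') :
    QuasiInjective M N B :=
  ⟨fun _ _ _ hn hn' hne => ⟨fun h => hne (hright hn hn' h), fun h => hne (hright hn' hn h).symm⟩,
    fun _ _ _ hm hm' hne => ⟨fun h => hne (hleft hm hm' h), fun h => hne (hleft hm' hm h).symm⟩⟩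

theorem isBisim_unravel (M : Kripke P Nom) : IsBisim M.unravel M fun x w => x.2 = w := by
  rintro ⟨p, w⟩ _ rfl
  refine ⟨fun _ => Iff.rfl, fun x hx => ?_, fun w' hR => ?_⟩
  · cases hx with
    | stay hR _ | leave hR _ => exact ⟨_, hR, rfl⟩
  · by_cases hback : ReflTransGen M.R w' w
    · exact ⟨_, .stay hR hback, rfl⟩
    · exact ⟨_, .leave hR hback, rfl⟩

theorem quasiInjective_unravel (M : Kripke P Nom) :
    QuasiInjective M.unravel M fun x w => x.2 = w := by
  refine quasiInjective_of_eq (fun hn hn' _ => hn.symm.trans hn') ?_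
  rintro x y _ hxy rfl hreach
  obtain ⟨-, -, heq⟩ := UnravelStep.suffix_and_reachable hreach
  exact Prod.ext (heq (hxy ▸ .refl)) hxy

section Lift

variable {A B : Type} {R : A → A → Prop} {S : B → B → Prop} {Y : A → B → Prop}
  {F : A → B → A → B → Prop} {a : A} {b : B}

/-- The relation between unravellings induced by a family `F` of relations between components,
indexed by their entry points: entry points are related pairwise by `Y`, and current states
by the relation at the latest entry points (`a` and `b` are those of the initial components). -/
def UnravelLift (Y : A → B → Prop) (F : A → B → A → B → Prop) (a : A) (b : B)
    (x : List A × A) (y : List B × B) : Prop :=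
  List.Forall₂ Y x.1 y.1 ∧ F (x.1.headD a) (y.1.headD b) x.2 y.2

namespace UnravelLift

theorem flip {x : List A × A} {y : List B × B} (hxy : UnravelLift Y F a b x y) :
    UnravelLift (flip Y) (fun d c => _root_.flip (F c d)) b a y x :=
  ⟨List.Forall₂.flip hxy.1, hxy.2⟩

theorem entry {x : List A × A} {y : List B × B} (hxy : UnravelLift Y F a b x y) (hab : Y a b) :
    Y (x.1.headD a) (y.1.headD b) := by
  obtain ⟨p, w⟩ := x
  obtain ⟨q, v⟩ := y
  obtain ⟨hpq, -⟩ := hxy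
  cases hpq with
  | nil => exact hab
  | cons hcd _ => exact hcd

theorem forth {x x' : List A × A} {y : List B × B} (hxy : UnravelLift Y F a b x y) (hab : Y a b)
    (hsim : ∀ {c d}, Y c d → IsComponentSim R S Y (F c d)) (hbase : ∀ {c d}, Y c d → F c d c d)
    (hx : UnravelStep R x x') :
    ∃ y', UnravelStep S y y' ∧ UnravelLift Y F a b x' y' := by
  have hY := hxy.entry hab
  obtain ⟨hpq, hF⟩ := hxy
  cases hx with
  | stay hR hback =>
    obtain ⟨v', hS, hback', hF'⟩ := (hsim hY).stay hF hR hback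
    exact ⟨(y.1, v'), .stay hS hback', hpq, hF'⟩
  | leave hR hleave =>
    obtain ⟨v', hS, hleave', hY'⟩ := (hsim hY).leave hF hR hleave
    exact ⟨(v' :: y.1, v'), .leave hS hleave', hpq.cons hY', hbase hY'⟩

theorem eq_of_reachable {x : List A × A} {y y' : List B × B} (hxy : UnravelLift Y F a b x y)
    (hxy' : UnravelLift Y F a b x y') (hab : Y a b)
    (hsim : ∀ {c d}, Y c d → IsComponentSim R S Y (F c d))
    (hreach : ReflTransGen (UnravelStep S) y y') : y = y' := by
  have hlist : y.1 = y'.1 := (UnravelStep.suffix_and_reachable hreach).1.eq_of_length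
    (hxy.1.length_eq.symm.trans hxy'.1.length_eq)
  refine Prod.ext hlist ((hsim (hxy.entry hab)).unique hxy.2 ?_)
  rw [hlist]
  exact hxy'.2

end UnravelLift

end Lift

variable {M N : Kripke P Nom} {Z : List (M.W × N.W) → M.W → N.W → Prop} {h : List (M.W × N.W)}
  {m : M.W} {n : N.W}

theorem IsHistoryBisim.exists_quasiInjective_bisim_unravel [Countable M.W] [Countable N.W]
    (hZ : IsHistoryBisim M N Z) (hz : Z h m n) :
    ∃ B : M.unravel.W → N.unravel.W → Prop, IsBisim M.unravel N.unravel B ∧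
      QuasiInjective M.unravel N.unravel B ∧ B ([], m) ([], n) := by
  let Y : M.W → N.W → Prop := fun c d => ∃ h, Z h c d
  have exists_matching : ∀ c d, Y c d → ∃ F, IsComponentMatching M N Z c d F :=
    fun _ _ ⟨_, hz⟩ => exists_isComponentMatching hZ hz
  choose! F hF using exists_matching
  have hmn : Y m n := ⟨h, hz⟩
  have hsim {c d} (hY : Y c d) : IsComponentSim M.R N.R Y (F c d) :=
    (hF c d hY).isComponentSim hZ fun hz => ⟨_, hz⟩
  have hsim' {d c} (hY : flip Y d c) : IsComponentSim N.R M.R (flip Y) (flip (F c d)) :=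
    (hF c d hY).symm.isComponentSim hZ.symm fun hz => ⟨_, hz⟩
  have hbase {c d} (hY : Y c d) : F c d c d := (hF c d hY).base
  refine ⟨UnravelLift Y F m n, fun x y hxy => ⟨fun p => ?_, fun x' hx => ?_, fun y' hy => ?_⟩,
    quasiInjective_of_eq (fun hn hn' => hn.eq_of_reachable hn' hmn hsim)
      (fun hm hm' => hm.flip.eq_of_reachable hm'.flip hmn hsim'), .nil, hbase hmn⟩
  · obtain ⟨h, hz, -⟩ := (hF _ _ (hxy.entry hmn)).coherent hxy.2 hxy.2
    exact (hZ.atomic hz).1 p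
  · exact hxy.forth hmn hsim hbase hx
  · obtain ⟨x', hx, hxy'⟩ := hxy.flip.forth hmn hsim' hbase hy
    exact ⟨x', hx, hxy'.flip⟩

theorem InvariantUnderQuasiInjective.fosatAt_iff_of_countable {φ : FOForm P Nom FVar}
    (hφ : InvariantUnderQuasiInjective φ) [Countable M.W] [Countable N.W]
    (hZ : IsHistoryBisim M N Z) (hz : Z h m n) : FOSatAt M m φ ↔ FOSatAt N n φ := by
  have hunravel (K : Kripke P Nom) (k : K.W) : FOSatAt K.unravel ([], k) φ ↔ FOSatAt K k φ :=
    hφ _ _ _ (isBisim_unravel K) (quasiInjective_unravel K) _ _ rfl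
  obtain ⟨B, hbis, hqi, hmn⟩ := hZ.exists_quasiInjective_bisim_unravel hz
  rw [← hunravel M, ← hunravel N]
  exact hφ _ _ B hbis hqi _ _ hmn

end Unravelling

/-! ### Countable submodels -/

section LowenheimSkolem

theorem exists_countable_closed {A ι : Type*} [Countable ι] (d : ι → List A → A → Prop) (a : A) :
    ∃ S : Set A, S.Countable ∧ a ∈ S ∧
      ∀ i l, (∀ x ∈ l, x ∈ S) → (∃ w, d i l w) → ∃ w ∈ S, d i l w := by
  have : Nonempty A := ⟨a⟩
  let L : FirstOrder.Language := ⟨fun _ => ι, fun _ => Empty⟩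
  have : Countable (Σ n, L.Functions n) := inferInstanceAs (Countable (Σ _ : ℕ, ι))
  let _ : L.Structure A :=
    { funMap := fun i x => Classical.epsilon (d i (List.ofFn x))
      RelMap := fun r => r.elim }
  refine ⟨FirstOrder.Language.Substructure.closure L {a},
    (Set.countable_singleton a).substructure_closure L,
    FirstOrder.Language.Substructure.subset_closure rfl, fun i l hl hw => ?_⟩
  have hmem := (FirstOrder.Language.Substructure.closure L {a}).fun_mem (n := l.length) i l.get
    fun j => hl _ (l.get_mem j)
  refine ⟨_, hmem, ?_⟩
  change d i l (Classical.epsilon (d i (List.ofFn l.get)))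
  rw [List.ofFn_get]
  exact Classical.epsilon_spec hw

/-- Closing pairs under `(x, y) ↦ (x.1, y.2)` makes the closed set a rectangle `S ×ˢ T`. -/
theorem exists_countable_closed_prod {A B ι κ : Type*} [Countable ι] [Countable κ]
    (d : ι → List (A × B) → A → Prop) (e : κ → List (A × B) → B → Prop) (a : A) (b : B) :
    ∃ (S : Set A) (T : Set B), S.Countable ∧ T.Countable ∧ a ∈ S ∧ b ∈ T ∧
      (∀ i l, (∀ x ∈ l, x ∈ S ×ˢ T) → (∃ w, d i l w) → ∃ w ∈ S, d i l w) ∧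
      (∀ k l, (∀ x ∈ l, x ∈ S ×ˢ T) → (∃ w, e k l w) → ∃ w ∈ T, e k l w) := by
  let demand : (ι ⊕ κ) ⊕ Unit → List (A × B) → A × B → Prop
    | .inl (.inl i), l, w => d i l w.1
    | .inl (.inr k), l, w => e k l w.2
    | .inr (), l, w => ∃ x y, l = [x, y] ∧ w = (x.1, y.2)
  obtain ⟨U, hU, hab, hclosed⟩ := exists_countable_closed demand (a, b)
  have hrect : ∀ x ∈ (Prod.fst '' U) ×ˢ (Prod.snd '' U), x ∈ U := by
    rintro ⟨_, _⟩ ⟨⟨x, hx, rfl⟩, y, hy, rfl⟩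
    obtain ⟨_, hw, x', y', hl, rfl⟩ :=
      hclosed (.inr ()) [x, y] (by simp [hx, hy]) ⟨_, x, y, rfl, rfl⟩
    obtain ⟨rfl, rfl⟩ : x = x' ∧ y = y' := by simpa using hl
    exact hw
  refine ⟨Prod.fst '' U, Prod.snd '' U, hU.image _, hU.image _, ⟨_, hab, rfl⟩, ⟨_, hab, rfl⟩,
    fun i l hl ⟨w, hw⟩ => ?_, fun k l hl ⟨w, hw⟩ => ?_⟩
  · obtain ⟨w', hw', hd⟩ := hclosed (.inl (.inl i)) l (fun x hx => hrect x (hl x hx)) ⟨(w, b), hw⟩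
    exact ⟨w'.1, ⟨w', hw', rfl⟩, hd⟩
  · obtain ⟨w', hw', he⟩ := hclosed (.inl (.inr k)) l (fun x hx => hrect x (hl x hx)) ⟨(a, w), hw⟩
    exact ⟨w'.2, ⟨w', hw', rfl⟩, he⟩

/-- The pairs `(v, χ)` such that `∃ v, χ` is a subformula. -/
def FOForm.exSubformulas : FOForm P Nom V → List (V × FOForm P Nom V)
  | .bot => []
  | .pred _ _ => []
  | .rel _ _ => []
  | .eq _ _ => []
  | .neg φ => φ.exSubformulas
  | .or φ ψ => φ.exSubformulas ++ ψ.exSubformulas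
  | .ex v φ => (v, φ) :: φ.exSubformulas

/-- The substructure of `M` with domain `S`. -/
abbrev Kripke.sub (M : Kripke P Empty) (S : Set M.W) : Kripke P Empty where
  W := S
  R x y := M.R x y
  V p x := M.V p x
  nom s := s.elim

theorem fosat_sub_iff_of_tarskiVaught [DecidableEq V] {M : Kripke P Empty} {S : Set M.W}
    {φ : FOForm P Empty V} (hS : ∀ q ∈ φ.exSubformulas, ∀ g : V → S,
      (∃ w, FOSat M (Function.update (Subtype.val ∘ g) q.1 w) q.2) →
        ∃ w ∈ S, FOSat M (Function.update (Subtype.val ∘ g) q.1 w) q.2) (g : V → S) :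
    FOSat (M.sub S) g φ ↔ FOSat M (Subtype.val ∘ g) φ := by
  have val_sub (g : V → S) (t : FOTerm Empty V) :
      ((t.val (M.sub S) g : S) : M.W) = t.val M (Subtype.val ∘ g) := by
    cases t with
    | var v => rfl
    | nom s => exact s.elim
  induction φ generalizing g with
  | bot => exact Iff.rfl
  | pred p t => simp only [FOSat, val_sub]
  | rel t u => simp only [FOSat, val_sub]
  | eq t u => simp only [FOSat, ← val_sub, Subtype.coe_inj]
  | neg φ ih => exact not_congr (ih hS g)
  | or φ ψ ihφ ihψ =>
    obtain ⟨hφ, hψ⟩ := List.forall_mem_append.1 hS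
    exact or_congr (ihφ hφ g) (ihψ hψ g)
  | ex v φ ih =>
    obtain ⟨hv, hφ⟩ := List.forall_mem_cons.1 hS
    simp only [FOSat, ih hφ, Function.comp_update]
    exact ⟨fun ⟨w, hw⟩ => ⟨w, hw⟩, fun hw => let ⟨w, hwS, hw⟩ := hv g hw; ⟨⟨w, hwS⟩, hw⟩⟩

variable {M N : Kripke P Empty} {Z : List (M.W × N.W) → M.W → N.W → Prop} [DecidableEq V]

/-- The existential demands on a subset of `M` that make it elementary for `φ` and preserve the
back condition of `Z`. The parameters of the demand of `∃ v, χ` are the values of the free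
variables of `χ`, in some fixed order; those of the back condition are the pair `(m, n')` of the
current state of `M` and the next state of `N`, followed by the history. -/
def SkolemDemand (M N : Kripke P Empty) (Z : List (M.W × N.W) → M.W → N.W → Prop)
    (φ : FOForm P Empty V) :
    Option {q // q ∈ φ.exSubformulas} → List (M.W × N.W) → M.W → Prop
  | some q, l, w => ∃ g : V → M.W, q.1.2.finite_free.toFinset.toList.map g = l.map Prod.fst ∧
      FOSat M (Function.update g q.1.1 w) q.1.2
  | none, a :: h, w => M.R a.1 w ∧ Z h w a.2
  | none, [], _ => False

/-- `S` satisfies all demands with parameters in `S` and `T`. -/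
def IsSkolemClosed (M N : Kripke P Empty) (Z : List (M.W × N.W) → M.W → N.W → Prop)
    (φ : FOForm P Empty V) (S : Set M.W) (T : Set N.W) : Prop :=
  ∀ i l, (∀ x ∈ l, x ∈ S ×ˢ T) → (∃ w, SkolemDemand M N Z φ i l w) →
    ∃ w ∈ S, SkolemDemand M N Z φ i l w

namespace IsSkolemClosed

variable {φ : FOForm P Empty V} {S : Set M.W} {T : Set N.W}

theorem fosat_sub_iff (hS : IsSkolemClosed M N Z φ S T) (hT : T.Nonempty) (g : V → S) :
    FOSat (M.sub S) g φ ↔ FOSat M (Subtype.val ∘ g) φ := by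
  obtain ⟨t, ht⟩ := hT
  refine fosat_sub_iff_of_tarskiVaught (fun q hq g ⟨w, hw⟩ => ?_) g
  let params := q.2.finite_free.toFinset.toList
  obtain ⟨w', hw', g', hg', hsat⟩ := hS (some ⟨q, hq⟩)
    (params.map fun u => ((g u : M.W), t))
    (by simp [ht]) ⟨w, Subtype.val ∘ g, by simp [params], hw⟩
  refine ⟨w', hw', (fosat_congr (eqOn_update_of_eqOn_diff (fun u hu => ?_) w')).1 hsat⟩
  have hagree : ∀ u ∈ params, g' u = g u := List.map_inj_left.1 (by simpa [params] using hg')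
  exact hagree u (by simpa [params] using hu.1)

theorem back (hS : IsSkolemClosed M N Z φ S T) (hZ : IsHistoryBisim M N Z) {h : List (S × T)}
    {m : S} {n n' : T} (hz : Z (h.map (Prod.map Subtype.val Subtype.val)) m n)
    (hn : N.R n n') :
    ∃ m' : S, M.R m m' ∧ Z (h.map (Prod.map Subtype.val Subtype.val)) m' n' := by
  obtain ⟨m', hm'⟩ := hZ.back hz hn
  obtain ⟨w, hw, hdemand⟩ := hS none
    ((m.1, n'.1) :: h.map (Prod.map Subtype.val Subtype.val))
    (List.forall_mem_cons.2 ⟨⟨m.2, n'.2⟩, List.forall_mem_map.2 fun x _ => ⟨x.1.2, x.2.2⟩⟩)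
    ⟨m', hm'⟩
  exact ⟨⟨w, hw⟩, hdemand⟩

end IsSkolemClosed

theorem exists_countable_isSkolemClosed (M N : Kripke P Empty)
    (Z : List (M.W × N.W) → M.W → N.W → Prop) (φ : FOForm P Empty V) (m : M.W) (n : N.W) :
    ∃ (S : Set M.W) (T : Set N.W), S.Countable ∧ T.Countable ∧ m ∈ S ∧ n ∈ T ∧
      IsSkolemClosed M N Z φ S T ∧
      IsSkolemClosed N M (fun h n m => Z (h.map Prod.swap) m n) φ T S := by
  have : Countable {q // q ∈ φ.exSubformulas} := (List.finite_toSet _).countable.to_subtype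
  obtain ⟨S, T, hS, hT, hm, hn, hSclosed, hTclosed⟩ := exists_countable_closed_prod
    (SkolemDemand M N Z φ)
    (fun i l => SkolemDemand N M (fun h n m => Z (h.map Prod.swap) m n) φ i (l.map Prod.swap)) m n
  refine ⟨S, T, hS, hT, hm, hn, hSclosed, fun i l hl hw => ?_⟩
  have hswap : ∀ x ∈ l.map Prod.swap, x ∈ S ×ˢ T :=
    List.forall_mem_map.2 fun x hx => (hl x hx).symm
  simpa using hTclosed i (l.map Prod.swap) hswap (by simpa using hw)

theorem IsHistoryBisim.sub (hZ : IsHistoryBisim M N Z) {φ : FOForm P Empty V} {S : Set M.W}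
    {T : Set N.W} (hS : IsSkolemClosed M N Z φ S T)
    (hT : IsSkolemClosed N M (fun h n m => Z (h.map Prod.swap) m n) φ T S) :
    IsHistoryBisim (M.sub S) (N.sub T)
      fun h m n => Z (h.map (Prod.map Subtype.val Subtype.val)) m n where
  atomic hz := by
    obtain ⟨hV, hh⟩ := hZ.atomic hz
    refine ⟨hV, fun a ha => ?_⟩
    simpa only [Prod.map_fst, Prod.map_snd, Subtype.coe_inj] using hh _ (List.mem_map_of_mem ha)
  forth {h m n m'} hz hm := by
    have hswap : ((h.map Prod.swap).map (Prod.map Subtype.val Subtype.val)).map Prod.swap =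
        h.map (Prod.map Subtype.val Subtype.val) := by
      simp only [List.map_map]
      rfl
    simpa only [hswap] using
      hT.back hZ.symm (h := h.map Prod.swap) (m := n) (n := m) (by rwa [hswap]) hm
  back hz hn := hS.back hZ hz hn
  record hz := hZ.record hz

theorem InvariantUnderQuasiInjective.fosatAt_iff_of_isHistoryBisim {φ : FOForm P Empty FVar}
    (hφ : InvariantUnderQuasiInjective φ) (hfree : φ.free ⊆ {Sum.inr false})
    (hZ : IsHistoryBisim M N Z) {m : M.W} {n : N.W} (hz : Z [] m n) :
    FOSatAt M m φ ↔ FOSatAt N n φ := by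
  obtain ⟨S, T, hSc, hTc, hm, hn, hS, hT⟩ := exists_countable_isSkolemClosed M N Z φ m n
  have : Countable S := hSc.to_subtype
  have : Countable T := hTc.to_subtype
  let g : FVar → S := fun _ => ⟨m, hm⟩
  let g' : FVar → T := fun _ => ⟨n, hn⟩
  calc FOSatAt M m φ
    _ ↔ FOSat M (Subtype.val ∘ g) φ := fosatAt_iff_fosat hfree (Subtype.val ∘ g)
    _ ↔ FOSat (M.sub S) g φ := (hS.fosat_sub_iff ⟨n, hn⟩ g).symm
    _ ↔ FOSatAt (M.sub S) ⟨m, hm⟩ φ := (fosatAt_iff_fosat (M := M.sub S) hfree g).symm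
    _ ↔ FOSatAt (N.sub T) ⟨n, hn⟩ φ := hφ.fosatAt_iff_of_countable (hZ.sub hS hT) (h := []) hz
    _ ↔ FOSat (N.sub T) g' φ := fosatAt_iff_fosat (M := N.sub T) hfree g'
    _ ↔ FOSat N (Subtype.val ∘ g') φ := hT.fosat_sub_iff ⟨m, hm⟩ g'
    _ ↔ FOSatAt N n φ := (fosatAt_iff_fosat hfree (Subtype.val ∘ g')).symm

end LowenheimSkolem


/-! ### Ultraproducts -/

section Ultraproduct

variable {α : Type} (U : Ultrafilter α)

theorem out_coe_eventuallyEq {X : α → Type*} (f : ∀ i, X i) :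
    ∀ᶠ i in U, Quotient.out (f : (U : Filter α).Product X) i = f i :=
  Quotient.exact (Quotient.out_eq (f : (U : Filter α).Product X))

variable {U}

theorem eq_iff_eventually_out {X : α → Type*} {x y : (U : Filter α).Product X} :
    x = y ↔ ∀ᶠ i in U, x.out i = y.out i :=
  Quotient.out_equiv_out.symm

theorem eventually_exists_iff_exists_out {X : α → Type*} [∀ i, Nonempty (X i)]
    {q : ∀ i, X i → Prop} :
    (∀ᶠ i in U, ∃ w, q i w) ↔ ∃ x : (U : Filter α).Product X, ∀ᶠ i in U, q i (x.out i) := by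
  refine ⟨fun h => ?_, fun ⟨x, hx⟩ => hx.mono fun i hi => ⟨_, hi⟩⟩
  let f : ∀ i, X i := fun i => Classical.epsilon (q i)
  refine ⟨f, ?_⟩
  filter_upwards [h, out_coe_eventuallyEq U f] with i hi hout
  rw [hout]
  exact Classical.epsilon_spec hi

variable (U) in
/-- The ultraproduct of the structures `M i`. Relations are evaluated on `Quotient.out`
representatives; any other choice agrees with it on a set of the ultrafilter. -/
abbrev Kripke.ultraproduct (M : α → Kripke P Empty) : Kripke P Empty where
  W := (U : Filter α).Product fun i => (M i).W
  R x y := ∀ᶠ i in U, (M i).R (x.out i) (y.out i)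
  V p x := ∀ᶠ i in U, (M i).V p (x.out i)
  nom s := s.elim

theorem fosat_ultraproduct_iff [DecidableEq V] {M : α → Kripke P Empty}
    [∀ i, Nonempty (M i).W] {φ : FOForm P Empty V} (g : V → (Kripke.ultraproduct U M).W) :
    FOSat (Kripke.ultraproduct U M) g φ ↔ ∀ᶠ i in U, FOSat (M i) (fun v => (g v).out i) φ := by
  have out_val (g : V → (Kripke.ultraproduct U M).W) (t : FOTerm Empty V) (i : α) :
      Quotient.out (t.val (Kripke.ultraproduct U M) g : (U : Filter α).Product _) i =
        t.val (M i) fun v => (g v).out i := by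
    cases t with
    | var v => rfl
    | nom s => exact s.elim
  induction φ generalizing g with
  | bot => simp [FOSat, U.neBot.ne]
  | pred p t => simp only [FOSat, out_val]
  | rel t u => simp only [FOSat, out_val]
  | eq t u => simp only [FOSat, eq_iff_eventually_out, out_val]
  | neg φ ih => simp only [FOSat, ih, Ultrafilter.eventually_not]
  | or φ ψ ihφ ihψ => simp only [FOSat, ihφ, ihψ, Ultrafilter.eventually_or]
  | ex v φ ih =>
    have out_update (w : (Kripke.ultraproduct U M).W) (i : α) :
        (fun u => (Function.update g v w u).out i) =
          Function.update (fun u => (g u).out i) v (w.out i) :=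
      Function.comp_update (fun x : (Kripke.ultraproduct U M).W => x.out i) g v w
    simp only [FOSat, ih, out_update, eventually_exists_iff_exists_out]

variable {M N : α → Kripke P Empty} [∀ i, Nonempty (M i).W] [∀ i, Nonempty (N i).W]

/-- Duplicator survives unboundedly many rounds along the ultrafilter, so spending one of them
leaves as many. -/
theorem isHistoryBisim_ultraproduct :
    IsHistoryBisim (Kripke.ultraproduct U M) (Kripke.ultraproduct U N) fun h m n =>
      ∃ r : α → ℕ, Tendsto r U atTop ∧ ∀ᶠ i in U,
        BoundedEquiv (M i) (N i) (r i) (h.map fun x => (x.1.out i, x.2.out i))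
          (m.out i) (n.out i) := by
  have pred_add_one {r : α → ℕ} (hr : Tendsto r U atTop) : ∀ᶠ i in U, r i = r i - 1 + 1 :=
    (hr.eventually_ge_atTop 1).mono fun i hi => (Nat.sub_add_cancel hi).symm
  have tendsto_pred {r : α → ℕ} (hr : Tendsto r U atTop) :
      Tendsto (fun i => r i - 1) U atTop :=
    (tendsto_sub_atTop_nat 1).comp hr
  refine ⟨?atomic, ?forth, ?back, ?record⟩
  case atomic =>
    rintro h m n ⟨r, -, hz⟩
    have hatomic := hz.mono fun i hi => hi.atomic
    refine ⟨fun p => eventually_congr (hatomic.mono fun i hi => hi.1 p), fun a ha => ?_⟩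
    rw [eq_iff_eventually_out, eq_iff_eventually_out]
    exact eventually_congr (hatomic.mono fun i hi => hi.2 _ (List.mem_map_of_mem ha))
  case forth =>
    rintro h m n m' ⟨r, hr, hz⟩ hm
    obtain ⟨n', hn'⟩ := eventually_exists_iff_exists_out.1 <| by
      filter_upwards [hz, hm, pred_add_one hr] with i hz hm hri
      rw [hri] at hz
      exact hz.2.1 _ hm
    exact ⟨n', hn'.mono fun _ h => h.1, _, tendsto_pred hr, hn'.mono fun _ h => h.2⟩
  case back =>
    rintro h m n n' ⟨r, hr, hz⟩ hn
    obtain ⟨m', hm'⟩ := eventually_exists_iff_exists_out.1 <| by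
      filter_upwards [hz, hn, pred_add_one hr] with i hz hn hri
      rw [hri] at hz
      exact hz.2.2.1 _ hn
    exact ⟨m', hm'.mono fun _ h => h.1, _, tendsto_pred hr, hm'.mono fun _ h => h.2⟩
  case record =>
    rintro h m n ⟨r, hr, hz⟩
    refine ⟨_, tendsto_pred hr, ?_⟩
    filter_upwards [hz, pred_add_one hr] with i hz hri
    rw [hri] at hz
    exact hz.2.2.2

end Ultraproduct

theorem InvariantUnderQuasiInjective.exists_boundedEquiv {φ : FOForm P Empty FVar}
    (hφ : InvariantUnderQuasiInjective φ) (hfree : φ.free ⊆ {Sum.inr false}) :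
    ∃ l, ∀ (M N : Kripke P Empty) (m : M.W) (n : N.W),
      BoundedEquiv M N l [] m n → FOSatAt M m φ → FOSatAt N n φ := by
  by_contra! hcontra
  choose M N m n hmn hm hn using hcontra
  have (l : ℕ) : Nonempty (M l).W := ⟨m l⟩
  have (l : ℕ) : Nonempty (N l).W := ⟨n l⟩
  let U : Ultrafilter ℕ := hyperfilter ℕ
  let mU : (Kripke.ultraproduct U M).W := (m : (U : Filter ℕ).Product _)
  let nU : (Kripke.ultraproduct U N).W := (n : (U : Filter ℕ).Product _)
  have hmU : ∀ᶠ l in U, mU.out l = m l := out_coe_eventuallyEq U m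
  have hnU : ∀ᶠ l in U, nU.out l = n l := out_coe_eventuallyEq U n
  have hiff : FOSatAt _ mU φ ↔ FOSatAt _ nU φ := by
    refine hφ.fosatAt_iff_of_isHistoryBisim hfree isHistoryBisim_ultraproduct
      ⟨id, Nat.hyperfilter_le_atTop, ?_⟩
    filter_upwards [hmU, hnU] with l hml hnl
    simpa only [hml, hnl, id, List.map_nil] using hmn l
  rw [fosatAt_iff_fosat hfree fun _ => mU, fosatAt_iff_fosat hfree fun _ => nU,
    fosat_ultraproduct_iff, fosat_ultraproduct_iff] at hiff
  have hsat : ∀ᶠ l in U, FOSat (M l) (fun _ => mU.out l) φ :=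
    hmU.mono fun l hl => hm l _ hl
  obtain ⟨l, hl, hnl⟩ := ((hiff.1 hsat).and hnU).exists
  exact hn l (hnl ▸ (fosatAt_iff_fosat hfree fun _ => nU.out l).2 hl)

end

/-- Hodkinson–Tahiri. For a hybrid signature without nominals, a
first-order formula `φ(x)` is equivalent to the standard translation of a hybrid sentence
of the `{↓}`-fragment iff it is invariant under quasi-injective bisimulations. -/
theorem hodkinson_tahiri_characterisation {P : Type}
    (φ : FOForm P Empty FVar) (hfree : φ.free ⊆ {Sum.inr false}) :
    (∃ ψ : HForm P Empty, ψ.inFragment {Feature.bind} ∧ ψ.free = ∅ ∧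
       ∀ (M : Kripke P Empty) (g : FVar → M.W), FOSat M g φ ↔ FOSat M g (stdTr false ψ)) ↔
    (∀ (M N : Kripke P Empty) (B : M.W → N.W → Prop),
       IsBisim M N B → QuasiInjective M N B →
       ∀ (m : M.W) (n : N.W), B m n → (FOSatAt M m φ ↔ FOSatAt N n φ)) := by
  constructor
  · rintro ⟨ψ, hψ, hclosed, hequiv⟩
    exact invariantUnderQuasiInjective_of_iff_stdTr hψ hclosed hfree hequiv
  · intro hφ
    obtain ⟨l, hl⟩ := InvariantUnderQuasiInjective.exists_boundedEquiv hφ hfree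
    exact exists_stdTr_iff_of_boundedEquiv hfree l hl
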